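/- Let F be a field, n a natural number, and a an n×n matrix over F. Let ã denote the F-linear endomorphism of the space of n×n matrices over F given by left multiplication x ↦ a·x. Then every coefficient of the characteristic polynomial of the matrix a is integral over the subring of F generated by the coefficients of the characteristic polynomial of the linear map ã. -/

import Mathlib

/-!
Left multiplication by `a` acts separately on each column, so in the basis of matrix units it is
block diagonal with one copy of `a` per column, and its characteristic polynomial is a power of that
of `a`. The latter is thus a monic divisor of a monic polynomial over the subring generated by the
coefficients of that power. In an extension where the divisor splits, its roots are integral over
this subring, being roots of the power, and its coefficients are polynomials in these roots.
-/

section BlockDiagonal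

variable {R m o : Type*} [CommRing R] [Fintype m] [DecidableEq m] [Fintype o] [DecidableEq o]

theorem charmatrix_blockDiagonal (M : o → Matrix m m R) :
    (Matrix.blockDiagonal M).charmatrix = Matrix.blockDiagonal fun k => (M k).charmatrix := by
  have hscalar : Matrix.scalar (m × o) (Polynomial.X : Polynomial R) =
      Matrix.blockDiagonal fun _ => Matrix.scalar m Polynomial.X :=
    (Matrix.blockDiagonal_diagonal fun _ _ => Polynomial.X).symm
  rw [Matrix.charmatrix, hscalar, RingHom.mapMatrix_apply,
    Matrix.blockDiagonal_map _ _ (map_zero _), ← Matrix.blockDiagonal_sub]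
  rfl

theorem charpoly_blockDiagonal (M : o → Matrix m m R) :
    (Matrix.blockDiagonal M).charpoly = ∏ k, (M k).charpoly := by
  simp only [Matrix.charpoly, charmatrix_blockDiagonal, Matrix.det_blockDiagonal]

end BlockDiagonal

section MulLeft

theorem stdBasis_repr_apply {R m n : Type*} [Semiring R] [Fintype m] [Finite n]
    (x : Matrix m n R) (i : m) (j : n) : (Matrix.stdBasis R m n).repr x (i, j) = x i j := by
  simp [Matrix.stdBasis]

theorem toMatrix_mulLeftLinearMap {R l m o : Type*} [CommSemiring R] [Fintype l] [Fintype m]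
    [DecidableEq m] [Fintype o] [DecidableEq o] (a : Matrix l m R) :
    LinearMap.toMatrix (Matrix.stdBasis R m o) (Matrix.stdBasis R l o)
      (mulLeftLinearMap o R a) = Matrix.blockDiagonal fun _ : o => a := by
  ext ⟨i, k⟩ ⟨j, l⟩
  rw [LinearMap.toMatrix_apply, stdBasis_repr_apply, Matrix.stdBasis_eq_single,
    mulLeftLinearMap_apply, Matrix.blockDiagonal_apply]
  by_cases hkl : k = l
  · subst hkl
    simp
  · simp [hkl]

variable {R m : Type*} [CommRing R] [Fintype m] [DecidableEq m]

theorem charpoly_mulLeftLinearMap {o : Type*} [Fintype o] (a : Matrix m m R) :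
    (mulLeftLinearMap o R a).charpoly = a.charpoly ^ Fintype.card o := by
  classical
  rw [← LinearMap.charpoly_toMatrix _ (Matrix.stdBasis R m o), toMatrix_mulLeftLinearMap,
    charpoly_blockDiagonal, Finset.prod_const, Finset.card_univ]

theorem charpoly_dvd_charpoly_mulLeft (a : Matrix m m R) :
    a.charpoly ∣ (LinearMap.mulLeft R a).charpoly := by
  rcases isEmpty_or_nonempty m with hm | hm
  · rw [Matrix.charpoly_isEmpty]
    exact one_dvd _
  · rw [← mulLeftLinearMap_eq_mulLeft, charpoly_mulLeftLinearMap]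
    exact dvd_pow_self _ Fintype.card_ne_zero

end MulLeft

theorem isIntegral_closure_coeff_of_dvd {R : Type*} [CommRing R] {p q : Polynomial R}
    (hp : p.Monic) (hq : q.Monic) (hqp : q ∣ p) (i : ℕ) :
    IsIntegral (Subring.closure (Set.range p.coeff)) (q.coeff i) := by
  set S := Subring.closure (Set.range p.coeff)
  have hlifts : p ∈ Polynomial.lifts (algebraMap S R) :=
    (Polynomial.lifts_iff_coeff_lifts p).mpr fun k =>
      ⟨⟨p.coeff k, Subring.subset_closure ⟨k, rfl⟩⟩, rfl⟩
  obtain ⟨P, hPp, -, hP⟩ := Polynomial.lifts_and_natDegree_eq_and_monic hlifts hp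
  exact Polynomial.isIntegral_coeff_of_dvd P q hP hq (hPp.symm ▸ hqp) i

theorem stmt3_general {R m : Type*} [CommRing R] [Fintype m] [DecidableEq m] (a : Matrix m m R)
    (i : ℕ) :
    IsIntegral (Subring.closure (Set.range (LinearMap.mulLeft R a).charpoly.coeff))
      (a.charpoly.coeff i) :=
  isIntegral_closure_coeff_of_dvd (LinearMap.charpoly_monic _) a.charpoly_monic
    (charpoly_dvd_charpoly_mulLeft a) i

/-- The characteristic coefficients of a matrix `a` over a field `F` are integral over the
subring of `F` generated by the characteristic coefficients of the left-multiplication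
operator `ã = LinearMap.mulLeft F a` on `n × n` matrices. -/
theorem stmt3 (F : Type*) [Field F] (n : ℕ) (a : Matrix (Fin n) (Fin n) F) (i : ℕ) :
    IsIntegral (Subring.closure (Set.range (LinearMap.mulLeft F a).charpoly.coeff))
      ((Matrix.charpoly a).coeff i) :=
  stmt3_general a i
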